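/- Let N be a positive integer, f : Fin N → ℝ with f i > 0 for all i, and q, q̄ : Fin N → ℝ both monotone nondecreasing with q F-majorizing q̄ (partial f-weighted sums of q̄ dominate those of q, with equal totals). Let k < l be indices such that q̄ i = q i for all i < k, q̄ j > q j for all j with k ≤ j ≤ l-1, and q̄ l < q l. Let m = (∑_{j=k}^{l} f j * q j)/(∑_{j=k}^{l} f j), and let λ ∈ [0,1] satisfy λ*q j + (1-λ)*m ≤ q̄ j for all j with k ≤ j ≤ l-1, and λ*q l + (1-λ)*m ≥ q̄ l. Define r : Fin N → ℝ by r i = q i for i < k or i > l, and r i = λ*q i + (1-λ)*m for k ≤ i ≤ l. Then r is monotone nondecreasing, q F-majorizes r, and r F-majorizes q̄. -/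

import Mathlib

open Finset

/-- `q` F-majorizes `qbar`: all partial f-weighted sums of `qbar` dominate
those of `q`, with equal f-weighted totals. -/
def FMajorizes {N : ℕ} (f q qbar : Fin N → ℝ) : Prop :=
  (∀ k : Fin N,
    ∑ j ∈ Finset.filter (fun j => j ≤ k) Finset.univ, f j * qbar j ≥
    ∑ j ∈ Finset.filter (fun j => j ≤ k) Finset.univ, f j * q j) ∧
  (∑ j, f j * qbar j = ∑ j, f j * q j)

/-!
Partial pooling moves every value on the pooled set towards the pool mean `m`. Since `q` is
nondecreasing, the values moved up (`q i ≤ m`) precede the values moved down, and moving does not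
change the total, so prefix sums can only increase: `q` majorizes the pooled vector `r`.
Conversely, at a threshold below the last pooled type `r` is pointwise dominated by the target up to
that threshold, while at any later threshold the remaining tail of `r` is that of `q`, so the
prefix sums of `r` and `q` agree there and the majorization of the target by `q` applies.
-/

theorem sum_filter_le_of_sum_filter_not_le {ι K : Type*} [AddCommGroup K] [PartialOrder K]
    [IsOrderedAddMonoid K] {s : Finset ι} {g h : ι → K} {P : ι → Prop} [DecidablePred P]
    (hsum : ∑ i ∈ s, g i = ∑ i ∈ s, h i)
    (hnot : ∑ i ∈ s with ¬P i, h i ≤ ∑ i ∈ s with ¬P i, g i) :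
    ∑ i ∈ s with P i, g i ≤ ∑ i ∈ s with P i, h i := by
  rw [← sum_filter_add_sum_filter_not s P g, ← sum_filter_add_sum_filter_not s P h] at hsum
  exact le_of_add_le_add_right (hsum.trans_le (add_le_add_right hnot _))

section Majorization

variable {ι K : Type*} [Fintype ι] [LinearOrder ι]

/-- The relation `FMajorizes` over an arbitrary finite linear order `ι`, with values in an arbitrary
ordered semiring: `q` majorizes `p` with respect to the weights `f`. As in `FMajorizes`, the
majorizing vector is the one with the smaller prefix sums. -/
def WeightedMajorizes [Semiring K] [PartialOrder K] (f q p : ι → K) : Prop :=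
  (∀ t, ∑ i with i ≤ t, f i * q i ≤ ∑ i with i ≤ t, f i * p i) ∧
    ∑ i, f i * p i = ∑ i, f i * q i

theorem fMajorizes_iff_weightedMajorizes {N : ℕ} {f q p : Fin N → ℝ} :
    FMajorizes f q p ↔ WeightedMajorizes f q p :=
  Iff.rfl

theorem WeightedMajorizes.refl [Semiring K] [PartialOrder K] (f q : ι → K) :
    WeightedMajorizes f q q :=
  ⟨fun _ => le_rfl, rfl⟩

theorem WeightedMajorizes.of_prefix_le_or_suffix_ge [Ring K] [PartialOrder K] [IsOrderedRing K]
    {f q r p : ι → K} (hf : ∀ i, 0 ≤ f i) (hqp : WeightedMajorizes f q p)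
    (hsum : ∑ i, f i * r i = ∑ i, f i * q i)
    (hr : ∀ t, (∀ i ≤ t, r i ≤ p i) ∨ ∀ i, t < i → q i ≤ r i) :
    WeightedMajorizes f r p := by
  refine ⟨fun t => ?_, hqp.2.trans hsum.symm⟩
  rcases hr t with hprefix | hsuffix
  · exact sum_le_sum fun i hi =>
      mul_le_mul_of_nonneg_left (hprefix i (mem_filter.1 hi).2) (hf i)
  · have hrq : ∑ i with i ≤ t, f i * r i ≤ ∑ i with i ≤ t, f i * q i :=
      sum_filter_le_of_sum_filter_not_le hsum <| sum_le_sum fun i hi =>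
        mul_le_mul_of_nonneg_left (hsuffix i (not_le.1 (mem_filter.1 hi).2)) (hf i)
    exact hrq.trans (hqp.1 t)

end Majorization

section PartialPool

variable {ι K : Type*}

/-- The signaled quality vector when the types in `s` reveal themselves with weight `lam` and are
pooled at the common level `m` with weight `1 - lam`, all other types being revealed. The level `m`
is a parameter; for Bayesian signals it is the `f`-weighted mean `s.centerMass f q`. -/
def partialPool [DecidableEq ι] [Ring K] (s : Finset ι) (lam m : K) (q : ι → K) : ι → K :=
  s.piecewise (fun i => lam * q i + (1 - lam) * m) q

section Pointwise

variable [DecidableEq ι] [Ring K] {s : Finset ι} {lam m : K} {q : ι → K} {i : ι}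

theorem partialPool_of_mem (hi : i ∈ s) : partialPool s lam m q i = lam * q i + (1 - lam) * m :=
  s.piecewise_eq_of_mem _ _ hi

theorem partialPool_of_notMem (hi : i ∉ s) : partialPool s lam m q i = q i :=
  s.piecewise_eq_of_notMem _ _ hi

theorem eq_partialPool {r : ι → K} (hr_out : ∀ i ∉ s, r i = q i)
    (hr_in : ∀ i ∈ s, r i = lam * q i + (1 - lam) * m) : r = partialPool s lam m q := by
  ext i
  by_cases hi : i ∈ s
  · rw [hr_in i hi, partialPool_of_mem hi]
  · rw [hr_out i hi, partialPool_of_notMem hi]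

variable [PartialOrder K] [IsOrderedRing K]

theorem le_partialPool (hlam : lam ≤ 1) (hi : q i ≤ m) : q i ≤ partialPool s lam m q i := by
  by_cases his : i ∈ s
  · calc q i = lam * q i + (1 - lam) * q i := by noncomm_ring
      _ ≤ lam * q i + (1 - lam) * m := by gcongr
      _ = partialPool s lam m q i := (partialPool_of_mem his).symm
  · exact (partialPool_of_notMem his).ge

theorem partialPool_le (hlam : lam ≤ 1) (hi : m ≤ q i) : partialPool s lam m q i ≤ q i := by
  by_cases his : i ∈ s
  · calc partialPool s lam m q i = lam * q i + (1 - lam) * m := partialPool_of_mem his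
      _ ≤ lam * q i + (1 - lam) * q i := by gcongr
      _ = q i := by noncomm_ring
  · exact (partialPool_of_notMem his).le

end Pointwise

theorem monotone_partialPool [LinearOrder ι] [Ring K] [PartialOrder K] [IsOrderedRing K]
    {s : Finset ι} {lam m : K} {q : ι → K} (hq : Monotone q)
    (hs : (s : Set ι).OrdConnected) (hlam : lam ∈ Set.Icc 0 1) {a b : ι} (ha : a ∈ s) (hb : b ∈ s)
    (hm : m ∈ Set.Icc (q a) (q b)) : Monotone (partialPool s lam m q) := by
  have hlam' : 0 ≤ 1 - lam := sub_nonneg.2 hlam.2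
  intro i j hij
  by_cases hi : i ∈ s <;> by_cases hj : j ∈ s
  · rw [partialPool_of_mem hi, partialPool_of_mem hj]
    gcongr
    exacts [hlam.1, hq hij]
  · have hbj : b ≤ j := le_of_not_ge fun hjb => hj (hs.out hi hb ⟨hij, hjb⟩)
    rw [partialPool_of_mem hi, partialPool_of_notMem hj]
    exact convex_Iic (q j) (hq hij) (hm.2.trans (hq hbj)) hlam.1 hlam' (add_sub_cancel _ _)
  · have hia : i ≤ a := le_of_not_ge fun hai => hi (hs.out ha hj ⟨hai, hij⟩)
    rw [partialPool_of_notMem hi, partialPool_of_mem hj]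
    exact convex_Ici (q i) (hq hij) ((hq hia).trans hm.1) hlam.1 hlam' (add_sub_cancel _ _)
  · rw [partialPool_of_notMem hi, partialPool_of_notMem hj]
    exact hq hij

theorem sum_mul_partialPool_centerMass [Fintype ι] [DecidableEq ι] [Field K] {s : Finset ι}
    {f : ι → K} (hfs : ∑ i ∈ s, f i ≠ 0) (lam : K) (q : ι → K) :
    ∑ i, f i * partialPool s lam (s.centerMass f q) q i = ∑ i, f i * q i := by
  have hmean : (∑ i ∈ s, f i) * s.centerMass f q = ∑ i ∈ s, f i * q i :=
    mul_inv_cancel_left₀ hfs _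
  have hpooled : ∑ i ∈ s, f i * partialPool s lam (s.centerMass f q) q i = ∑ i ∈ s, f i * q i :=
    calc ∑ i ∈ s, f i * partialPool s lam (s.centerMass f q) q i
        = ∑ i ∈ s, (lam * (f i * q i) + (1 - lam) * (f i * s.centerMass f q)) :=
          sum_congr rfl fun i hi => by rw [partialPool_of_mem hi]; ring
      _ = lam * ∑ i ∈ s, f i * q i + (1 - lam) * ((∑ i ∈ s, f i) * s.centerMass f q) := by
          rw [sum_add_distrib, mul_sum, sum_mul, mul_sum]
      _ = ∑ i ∈ s, f i * q i := by rw [hmean]; ring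
  have hrevealed : ∑ i ∈ sᶜ, f i * partialPool s lam (s.centerMass f q) q i =
      ∑ i ∈ sᶜ, f i * q i :=
    sum_congr rfl fun i hi => by rw [partialPool_of_notMem (mem_compl.1 hi)]
  rw [← sum_add_sum_compl s, hpooled, hrevealed, sum_add_sum_compl]

section CenterMass

variable [LinearOrder ι] [Field K] [LinearOrder K] [IsStrictOrderedRing K]
  {s : Finset ι} {f q p : ι → K} {lam : K}

theorem monotone_partialPool_centerMass (hs : (s : Set ι).OrdConnected) (hf : ∀ i ∈ s, 0 ≤ f i)
    (hfs : 0 < ∑ i ∈ s, f i) (hq : Monotone q) (hlam : lam ∈ Set.Icc 0 1) :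
    Monotone (partialPool s lam (s.centerMass f q) q) := by
  obtain ⟨a, ha, hqa⟩ := (concaveOn_id convex_univ).exists_le_of_centerMass hf hfs
    fun i _ => Set.mem_univ (q i)
  obtain ⟨b, hb, hqb⟩ := (convexOn_id convex_univ).exists_ge_of_centerMass hf hfs
    fun i _ => Set.mem_univ (q i)
  exact monotone_partialPool hq hs hlam ha hb ⟨hqa, hqb⟩

variable [Fintype ι]

theorem weightedMajorizes_partialPool_centerMass (hf : ∀ i, 0 ≤ f i) (hfs : ∑ i ∈ s, f i ≠ 0)
    (hq : Monotone q) (hlam : lam ≤ 1) :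
    WeightedMajorizes f q (partialPool s lam (s.centerMass f q) q) := by
  refine .of_prefix_le_or_suffix_ge hf (.refl f _)
    (sum_mul_partialPool_centerMass hfs lam q).symm fun t => ?_
  rcases le_total (q t) (s.centerMass f q) with hqt | hqt
  · exact .inl fun i hit => le_partialPool hlam ((hq hit).trans hqt)
  · exact .inr fun i hti => partialPool_le hlam (hqt.trans (hq hti.le))

theorem WeightedMajorizes.partialPool_centerMass (hf : ∀ i, 0 ≤ f i) (hfs : ∑ i ∈ s, f i ≠ 0)
    (hqp : WeightedMajorizes f q p)
    (hle : ∀ i, ∀ j ∈ s, i < j → partialPool s lam (s.centerMass f q) q i ≤ p i) :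
    WeightedMajorizes f (partialPool s lam (s.centerMass f q) q) p := by
  refine .of_prefix_le_or_suffix_ge hf hqp (sum_mul_partialPool_centerMass hfs lam q) fun t => ?_
  by_cases ht : ∃ j ∈ s, t < j
  · obtain ⟨j, hj, htj⟩ := ht
    exact .inl fun i hit => hle i j hj (hit.trans_lt htj)
  · exact .inr fun i hti => (partialPool_of_notMem fun hi => ht ⟨i, hi, hti⟩).ge

theorem algorithm_step_correct_general {k l : ι} {m : K} {r : ι → K} (hf : ∀ i, 0 ≤ f i)
    (hblock : 0 < ∑ i with k ≤ i ∧ i ≤ l, f i) (hq : Monotone q) (hqp : WeightedMajorizes f q p)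
    (hbelow : ∀ i < k, q i ≤ p i)
    (hm : m = (∑ i with k ≤ i ∧ i ≤ l, f i * q i) / ∑ i with k ≤ i ∧ i ≤ l, f i)
    (hlam : lam ∈ Set.Icc 0 1) (hmid : ∀ i, k ≤ i → i < l → lam * q i + (1 - lam) * m ≤ p i)
    (hr_out : ∀ i, i < k ∨ l < i → r i = q i)
    (hr_in : ∀ i, k ≤ i → i ≤ l → r i = lam * q i + (1 - lam) * m) :
    Monotone r ∧ WeightedMajorizes f q r ∧ WeightedMajorizes f r p := by
  let s : Finset ι := {i | k ≤ i ∧ i ≤ l}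
  have mem_s {i : ι} : i ∈ s ↔ k ≤ i ∧ i ≤ l := mem_filter_univ i
  have hs : (s : Set ι).OrdConnected := by
    rw [show (s : Set ι) = Set.Icc k l from Set.ext fun _ => mem_s]
    exact Set.ordConnected_Icc
  obtain rfl : m = s.centerMass f q := hm.trans (div_eq_inv_mul _ _)
  have hr : r = partialPool s lam (s.centerMass f q) q :=
    eq_partialPool
      (fun i hi => hr_out i (by rwa [mem_s, not_and_or, not_le, not_le] at hi))
      (fun i hi => hr_in i (mem_s.1 hi).1 (mem_s.1 hi).2)
  have hle : ∀ i, ∀ j ∈ s, i < j → r i ≤ p i := by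
    intro i j hj hij
    have hil : i < l := hij.trans_le (mem_s.1 hj).2
    rcases lt_or_ge i k with hik | hki
    · exact (hr_out i (.inl hik)).trans_le (hbelow i hik)
    · exact (hr_in i hki hil.le).trans_le (hmid i hki hil)
  subst hr
  exact ⟨monotone_partialPool_centerMass hs (fun i _ => hf i) hblock hq hlam,
    weightedMajorizes_partialPool_centerMass hf hblock.ne' hq hlam.2,
    hqp.partialPool_centerMass hf hblock.ne' hle⟩

end CenterMass

end PartialPool

/-- Correctness of one step of the construction algorithm:
mixing full revelation (weight `λ`) with the interval-pooled signal over types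
`k` through `l` (weight `1-λ`) produces a monotone vector `r` sandwiched in
the F-majorization order between `q` and the target `q̄`. -/
theorem algorithm_step_correct
    (N : ℕ) (hN : 0 < N)
    (f : Fin N → ℝ) (hf : ∀ i, 0 < f i)
    (q qbar : Fin N → ℝ)
    (hq : ∀ i j : Fin N, i ≤ j → q i ≤ q j)
    (hqbar : ∀ i j : Fin N, i ≤ j → qbar i ≤ qbar j)
    (hmaj : FMajorizes f q qbar)
    (k l : Fin N) (hkl : k < l)
    (hbelow : ∀ i : Fin N, i < k → qbar i = q i)
    (hmid : ∀ j : Fin N, k ≤ j → j < l → qbar j > q j)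
    (hl : qbar l < q l)
    (m : ℝ)
    (hm : m = (∑ j ∈ Finset.filter (fun j => k ≤ j ∧ j ≤ l) Finset.univ, f j * q j) /
              (∑ j ∈ Finset.filter (fun j => k ≤ j ∧ j ≤ l) Finset.univ, f j))
    (lam : ℝ) (hlam : lam ∈ Set.Icc (0 : ℝ) 1)
    (hlam_mid : ∀ j : Fin N, k ≤ j → j < l → lam * q j + (1 - lam) * m ≤ qbar j)
    (hlam_l : lam * q l + (1 - lam) * m ≥ qbar l)
    (r : Fin N → ℝ)
    (hr_out : ∀ i : Fin N, (i < k ∨ l < i) → r i = q i)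
    (hr_in : ∀ i : Fin N, k ≤ i → i ≤ l → r i = lam * q i + (1 - lam) * m) :
    (∀ i j : Fin N, i ≤ j → r i ≤ r j) ∧
    FMajorizes f q r ∧ FMajorizes f r qbar := by
  have hblock : 0 < ∑ i with k ≤ i ∧ i ≤ l, f i :=
    sum_pos (fun i _ => hf i) ⟨k, (mem_filter_univ k).2 ⟨le_rfl, hkl.le⟩⟩
  simp only [fMajorizes_iff_weightedMajorizes] at hmaj ⊢
  exact algorithm_step_correct_general (fun i => (hf i).le) hblock hq hmaj
    (fun i hi => (hbelow i hi).ge) hm hlam hlam_mid hr_out hr_in
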